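/- Let 𝒳 and 𝒲 be standard Borel spaces, R a probability measure on 𝒲, and f : 𝒳 × 𝒲 → 𝒳 measurable with t-step transition maps F_t. For probability measures Φ, Ψ on 𝒳 define J_1(Φ, Ψ) := inf { ∫_𝒳 D(κ(x) ‖ R) dΦ(x) : κ a Markov kernel from 𝒳 to 𝒲 with κ(x) ≪ R for Φ-a.e. x and (Φ ⊗ κ) ∘ f⁻¹ = Ψ }. Then for every t ≥ 1 and every probability measure Φ on 𝒳, the minimum conditional relative entropy supply required to maintain the state distribution equal to Φ at all times satisfies: inf { ∫_𝒳 D(κ(x) ‖ R^{⊗t}) dΦ(x) : κ a Markov kernel from 𝒳 to 𝒲^t with κ(x) ≪ R^{⊗t} for Φ-a.e. x and (Φ ⊗ κ) ∘ F_k⁻¹ = Φ for all k = 1, …, t } = t · J_1(Φ, Φ), with both sides valued in [0,∞]. (Here the pushforward under F_k is taken of the marginal of Φ ⊗ κ on 𝒳 × 𝒲^k.) -/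

import Mathlib

open MeasureTheory ProbabilityTheory
open scoped ENNReal ProbabilityTheory Classical

/-- Kullback-Leibler divergence `D(P ‖ Q)`, valued in `[0,∞]`.  For probability measures with
`P ≪ Q` it equals `∫ log (dP/dQ) dP`, computed here in the equivalent nonnegative form
`∫⁻ (φ log φ - φ + 1) dQ` where `φ = dP/dQ`; it is `∞` when `¬ P ≪ Q`. -/
noncomputable def klDiv {α : Type*} [MeasurableSpace α] (P Q : Measure α) : ℝ≥0∞ :=
  if P ≪ Q then
    ∫⁻ x, ENNReal.ofReal ((P.rnDeriv Q x).toReal * Real.log (P.rnDeriv Q x).toReal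
      - (P.rnDeriv Q x).toReal + 1) ∂Q
  else ∞

/-- The `t`-step state transition maps: `F 0 (x, _) = x` and
`F (k+1) (x, w₀, …, w_k) = f (F k (x, w₀, …, w_{k-1}), w_k)`. -/
def stateTrans {𝒳 𝒲 : Type*} (f : 𝒳 × 𝒲 → 𝒳) : (t : ℕ) → 𝒳 × (Fin t → 𝒲) → 𝒳
  | 0, p => p.1
  | t + 1, p => f (stateTrans f t (p.1, fun i => p.2 i.castSucc), p.2 (Fin.last t))

/-- The minimum required conditional relative entropy supply to drive the state distribution
from `Φ` to `Ψ` under the transition map `F : 𝒳 × 𝒱 → 𝒳` (for `J_t` take `𝒱 = 𝒲^t`,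
`F = F_t` and `Rt = R^{⊗t}`): the infimum over all Markov kernels `κ` with `κ x ≪ Rt` for
`Φ`-a.e. `x` and `(Φ ⊗ κ) ∘ F⁻¹ = Ψ` of `∫ D(κ(x) ‖ Rt) dΦ(x)`, with `inf ∅ = ∞`. -/
noncomputable def reqSupply {𝒳 𝒱 : Type*} [MeasurableSpace 𝒳] [MeasurableSpace 𝒱]
    (F : 𝒳 × 𝒱 → 𝒳) (Rt : Measure 𝒱) (Φ Ψ : Measure 𝒳) : ℝ≥0∞ :=
  ⨅ (κ : Kernel 𝒳 𝒱) (_ : IsMarkovKernel κ) (_ : ∀ᵐ x ∂Φ, κ x ≪ Rt)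
    (_ : (Φ ⊗ₘ κ).map F = Ψ), ∫⁻ x, klDiv (κ x) Rt ∂Φ

/-!
Disintegration turns a control kernel into a joint law of the initial state and the noise, whose
divergence from the nominal law is the supply. The chain rule splits the divergence of a law over
`t + 1` steps into that of its first `t` steps and that of the last noise relative to the past.
By data processing along `past ↦ state at time t`, the second part is at least the one-step supply;
equality holds when the last noise depends on the past through that state only, and every one-step
law lifts to such a coupling. Hence each step adds exactly its own one-step supply to the optimum.
-/

section KullbackLeibler

variable {α β : Type*} [MeasurableSpace α] [MeasurableSpace β]

lemma klDiv_eq_informationTheory_klDiv (P Q : Measure α) [IsFiniteMeasure P] [IsFiniteMeasure Q] :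
    klDiv P Q = InformationTheory.klDiv P Q := by
  rw [klDiv, InformationTheory.klDiv_eq_lintegral_klFun]
  simp only [InformationTheory.klFun_apply, add_sub_right_comm]

lemma klDiv_map_measurableEquiv (e : α ≃ᵐ β) (μ ν : Measure α) [IsFiniteMeasure μ]
    [IsFiniteMeasure ν] :
    InformationTheory.klDiv (μ.map e) (ν.map e) = InformationTheory.klDiv μ ν := by
  refine le_antisymm (InformationTheory.klDiv_map_le μ ν e.measurable) ?_
  simpa using InformationTheory.klDiv_map_le (μ.map e) (ν.map e) e.symm.measurable

section Kernel

variable [MeasurableSpace.CountableOrCountablyGenerated α β] (κ η : Kernel α β)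

lemma measurable_klFun_kernel_rnDeriv :
    Measurable fun p : α × β =>
      ENNReal.ofReal (InformationTheory.klFun (κ.rnDeriv η p.1 p.2).toReal) :=
  (InformationTheory.measurable_klFun.comp
    (Kernel.measurable_rnDeriv κ η).ennreal_toReal).ennreal_ofReal

variable [IsFiniteKernel κ] [IsFiniteKernel η]

lemma klDiv_kernel_eq_lintegral_rnDeriv {a : α} (ha : κ a ≪ η a) :
    InformationTheory.klDiv (κ a) (η a) =
      ∫⁻ b, ENNReal.ofReal (InformationTheory.klFun (κ.rnDeriv η a b).toReal) ∂η a := by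
  rw [InformationTheory.klDiv_eq_lintegral_klFun_of_ac ha]
  refine lintegral_congr_ae ?_
  filter_upwards [Kernel.rnDeriv_eq_rnDeriv_measure (κ := κ) (η := η) (a := a)] with b hb
  rw [hb]

lemma measurable_klDiv_kernel : Measurable fun a => InformationTheory.klDiv (κ a) (η a) := by
  have h_eq : (fun a => InformationTheory.klDiv (κ a) (η a)) = fun a => if κ a ≪ η a then
      ∫⁻ b, ENNReal.ofReal (InformationTheory.klFun (κ.rnDeriv η a b).toReal) ∂η a else ∞ := by
    ext a
    split_ifs with ha
    · exact klDiv_kernel_eq_lintegral_rnDeriv κ η ha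
    · exact InformationTheory.klDiv_of_not_ac ha
  rw [h_eq]
  exact Measurable.ite (Kernel.measurableSet_absolutelyContinuous κ η)
    (measurable_klFun_kernel_rnDeriv κ η).lintegral_kernel_prod_right' measurable_const

variable (μ : Measure α) [IsFiniteMeasure μ]

variable {κ η μ} in
lemma rnDeriv_compProd_right (hac : ∀ᵐ a ∂μ, κ a ≪ η a) :
    (μ ⊗ₘ κ).rnDeriv (μ ⊗ₘ η) =ᵐ[μ ⊗ₘ η] fun p => κ.rnDeriv η p.1 p.2 := by
  have h_density : μ ⊗ₘ κ = (μ ⊗ₘ η).withDensity fun p => κ.rnDeriv η p.1 p.2 := by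
    rw [← Measure.compProd_withDensity (Kernel.measurable_rnDeriv κ η)]
    refine Measure.compProd_congr ?_
    filter_upwards [hac] with a ha using (Kernel.withDensity_rnDeriv_eq ha).symm
  rw [h_density]
  exact Measure.rnDeriv_withDensity _ (Kernel.measurable_rnDeriv κ η)

lemma klDiv_compProd_right :
    InformationTheory.klDiv (μ ⊗ₘ κ) (μ ⊗ₘ η) = ∫⁻ a, InformationTheory.klDiv (κ a) (η a) ∂μ := by
  by_cases hac : ∀ᵐ a ∂μ, κ a ≪ η a
  · calc InformationTheory.klDiv (μ ⊗ₘ κ) (μ ⊗ₘ η)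
      _ = ∫⁻ p, ENNReal.ofReal (InformationTheory.klFun (κ.rnDeriv η p.1 p.2).toReal)
            ∂(μ ⊗ₘ η) := by
        rw [InformationTheory.klDiv_eq_lintegral_klFun_of_ac
          (Measure.absolutelyContinuous_compProd_right_iff.2 hac)]
        refine lintegral_congr_ae ?_
        filter_upwards [rnDeriv_compProd_right hac] with p hp
        rw [hp]
      _ = ∫⁻ a, ∫⁻ b, ENNReal.ofReal (InformationTheory.klFun (κ.rnDeriv η a b).toReal)
            ∂η a ∂μ :=
        Measure.lintegral_compProd (measurable_klFun_kernel_rnDeriv κ η)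
      _ = ∫⁻ a, InformationTheory.klDiv (κ a) (η a) ∂μ := by
        refine lintegral_congr_ae ?_
        filter_upwards [hac] with a ha using (klDiv_kernel_eq_lintegral_rnDeriv κ η ha).symm
  · have h_top : ∫⁻ a, InformationTheory.klDiv (κ a) (η a) ∂μ = ∞ := by
      by_contra h_ne
      refine hac ?_
      filter_upwards [ae_lt_top (measurable_klDiv_kernel κ η) h_ne] with a ha
      exact (InformationTheory.klDiv_ne_top_iff.1 ha.ne).1
    rw [h_top, InformationTheory.klDiv_of_not_ac]
    rwa [Measure.absolutelyContinuous_compProd_right_iff]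

end Kernel

lemma klDiv_compProd_prod [MeasurableSpace.CountableOrCountablyGenerated α β] (μ : Measure α)
    [IsFiniteMeasure μ] (κ : Kernel α β) [IsFiniteKernel κ] (Q : Measure β) [IsFiniteMeasure Q] :
    InformationTheory.klDiv (μ ⊗ₘ κ) (μ.prod Q) = ∫⁻ a, klDiv (κ a) Q ∂μ := by
  simp only [← Measure.compProd_const, klDiv_compProd_right, Kernel.const_apply,
    klDiv_eq_informationTheory_klDiv]

lemma klDiv_prod_eq_add [StandardBorelSpace β] (σ : Measure (α × β)) [IsFiniteMeasure σ]
    (π : Measure α) [IsFiniteMeasure π] (Q : Measure β) [IsProbabilityMeasure Q] :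
    InformationTheory.klDiv σ (π.prod Q) =
      InformationTheory.klDiv σ.fst π + InformationTheory.klDiv σ (σ.fst.prod Q) := by
  have : Nonempty β := nonempty_of_isProbabilityMeasure Q
  have h_chain := InformationTheory.klDiv_compProd_eq_add (μ := σ.fst) (ν := π)
    (κ := σ.condKernel) (η := Kernel.const α Q)
  rwa [σ.disintegrate, Measure.compProd_const, Measure.compProd_const] at h_chain

end KullbackLeibler

lemma isFiniteMeasure_of_fst_eq {α β : Type*} [MeasurableSpace α] [MeasurableSpace β]
    {μ : Measure α} [IsFiniteMeasure μ] {σ : Measure (α × β)} (h : σ.fst = μ) :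
    IsFiniteMeasure σ :=
  ⟨by rw [← Measure.fst_univ, h]; exact measure_lt_top μ Set.univ⟩

section Lift

variable {𝒮 𝒳 𝒱 : Type*} [MeasurableSpace 𝒮] [MeasurableSpace 𝒳] [MeasurableSpace 𝒱]
  {g : 𝒮 → 𝒳}

lemma map_prodMap_id_fst (hg : Measurable g) (σ : Measure (𝒮 × 𝒱)) :
    (σ.map (Prod.map g id)).fst = σ.fst.map g := by
  rw [Measure.fst, Measure.fst, Measure.map_map measurable_fst (hg.prodMap measurable_id),
    Measure.map_map hg measurable_fst]
  rfl

lemma map_prodMap_id_prod (hg : Measurable g) (P : Measure 𝒮) [SFinite P]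
    (Q : Measure 𝒱) [SFinite Q] :
    (P.prod Q).map (Prod.map g id) = (P.map g).prod Q := by
  rw [← Measure.map_prod_map _ _ hg measurable_id, Measure.map_id]

lemma map_prodMap_id_compProd_comap (hg : Measurable g) (P : Measure 𝒮) [SFinite P]
    (κ : Kernel 𝒳 𝒱) [IsSFiniteKernel κ] :
    (P ⊗ₘ κ.comap g hg).map (Prod.map g id) = P.map g ⊗ₘ κ := by
  ext s hs
  rw [Measure.map_apply (hg.prodMap measurable_id) hs,
    Measure.compProd_apply ((hg.prodMap measurable_id) hs), Measure.compProd_apply hs,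
    lintegral_map (Kernel.measurable_kernel_prodMk_left hs) hg]
  rfl

lemma exists_lift_klDiv_eq [StandardBorelSpace 𝒱] (hg : Measurable g) (P : Measure 𝒮)
    [IsFiniteMeasure P] (Q : Measure 𝒱) [IsProbabilityMeasure Q] (τ : Measure (𝒳 × 𝒱))
    (hτ : τ.fst = P.map g) :
    ∃ σ : Measure (𝒮 × 𝒱), σ.fst = P ∧ σ.map (Prod.map g id) = τ ∧
      InformationTheory.klDiv σ (P.prod Q) = InformationTheory.klDiv τ (τ.fst.prod Q) := by
  have : Nonempty 𝒱 := nonempty_of_isProbabilityMeasure Q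
  have : IsFiniteMeasure τ := isFiniteMeasure_of_fst_eq hτ
  refine ⟨P ⊗ₘ τ.condKernel.comap g hg, Measure.fst_compProd _ _, ?_, ?_⟩
  · rw [map_prodMap_id_compProd_comap, ← hτ, τ.disintegrate]
  · have h_meas : Measurable fun x => klDiv (τ.condKernel x) Q := by
      simpa only [klDiv_eq_informationTheory_klDiv, Kernel.const_apply] using
        measurable_klDiv_kernel τ.condKernel (Kernel.const 𝒳 Q)
    conv_rhs => rw [← τ.disintegrate τ.condKernel]
    rw [Measure.fst_compProd, klDiv_compProd_prod, klDiv_compProd_prod, hτ, lintegral_map h_meas hg]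
    rfl

end Lift

section ReqSupply

variable {𝒮 𝒳 𝒱 : Type*} [MeasurableSpace 𝒮] [MeasurableSpace 𝒳] [MeasurableSpace 𝒱]
  [StandardBorelSpace 𝒱]

lemma iInf_kernel_eq_iInf_law (Q : Measure 𝒱) [IsProbabilityMeasure Q] (Φ : Measure 𝒳)
    [IsFiniteMeasure Φ] (C : Measure (𝒳 × 𝒱) → Prop) :
    (⨅ (κ : Kernel 𝒳 𝒱) (_ : IsMarkovKernel κ) (_ : ∀ᵐ x ∂Φ, κ x ≪ Q) (_ : C (Φ ⊗ₘ κ)),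
        ∫⁻ x, klDiv (κ x) Q ∂Φ)
      = ⨅ (ρ : Measure (𝒳 × 𝒱)) (_ : ρ.fst = Φ) (_ : C ρ),
        InformationTheory.klDiv ρ (Φ.prod Q) := by
  refine le_antisymm
    (le_iInf fun ρ => le_iInf fun hρ => le_iInf fun hC => ?_)
    (le_iInf fun κ => le_iInf fun hκ => le_iInf fun _ => le_iInf fun hC => ?_)
  · by_cases h_top : InformationTheory.klDiv ρ (Φ.prod Q) = ∞
    · exact h_top ▸ le_top
    have : Nonempty 𝒱 := nonempty_of_isProbabilityMeasure Q
    have : IsFiniteMeasure ρ := isFiniteMeasure_of_fst_eq hρ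
    have h_dis : Φ ⊗ₘ ρ.condKernel = ρ := hρ ▸ ρ.disintegrate ρ.condKernel
    have hac : ∀ᵐ x ∂Φ, ρ.condKernel x ≪ Q := by
      have h := (InformationTheory.klDiv_ne_top_iff.1 h_top).1
      rw [← h_dis, ← Measure.compProd_const] at h
      exact Measure.absolutelyContinuous_compProd_right_iff.1 h
    refine iInf₂_le_of_le ρ.condKernel inferInstance
      (iInf₂_le_of_le hac (h_dis.symm ▸ hC) (le_of_eq ?_))
    rw [← klDiv_compProd_prod, h_dis]
  · rw [← klDiv_compProd_prod]
    exact iInf₂_le_of_le _ (Measure.fst_compProd Φ κ) (iInf_le _ hC)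

lemma reqSupply_eq_iInf_law (F : 𝒳 × 𝒱 → 𝒳) (Q : Measure 𝒱) [IsProbabilityMeasure Q]
    (Φ Ψ : Measure 𝒳) [IsFiniteMeasure Φ] :
    reqSupply F Q Φ Ψ = ⨅ (ρ : Measure (𝒳 × 𝒱)) (_ : ρ.fst = Φ) (_ : ρ.map F = Ψ),
      InformationTheory.klDiv ρ (Φ.prod Q) :=
  iInf_kernel_eq_iInf_law Q Φ fun ρ => ρ.map F = Ψ

lemma iInf_klDiv_extension_eq_add {f : 𝒳 × 𝒱 → 𝒳} {g : 𝒮 → 𝒳} (hf : Measurable f)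
    (hg : Measurable g) (P π : Measure 𝒮) [IsFiniteMeasure P] [IsFiniteMeasure π] (Q : Measure 𝒱)
    [IsProbabilityMeasure Q] (Ψ : Measure 𝒳) :
    (⨅ (σ : Measure (𝒮 × 𝒱)) (_ : σ.fst = P) (_ : σ.map (f ∘ Prod.map g id) = Ψ),
        InformationTheory.klDiv σ (π.prod Q))
      = InformationTheory.klDiv P π + reqSupply f Q (P.map g) Ψ := by
  have hg' : Measurable (Prod.map g (id : 𝒱 → 𝒱)) := hg.prodMap measurable_id
  rw [reqSupply_eq_iInf_law]
  simp only [ENNReal.add_iInf, ← Measure.map_map hf hg']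
  refine le_antisymm
    (le_iInf fun τ => le_iInf fun hτ => le_iInf fun hτΨ => ?_)
    (le_iInf fun σ => le_iInf fun hσ => le_iInf fun hσΨ => ?_)
  · obtain ⟨σ, hσ, hστ, h_eq⟩ := exists_lift_klDiv_eq hg P Q τ hτ
    have : IsFiniteMeasure σ := isFiniteMeasure_of_fst_eq hσ
    refine iInf₂_le_of_le σ hσ (iInf_le_of_le (hστ ▸ hτΨ) (le_of_eq ?_))
    rw [klDiv_prod_eq_add σ, hσ, h_eq, hτ]
  · have : IsFiniteMeasure σ := isFiniteMeasure_of_fst_eq hσ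
    refine iInf₂_le_of_le (σ.map (Prod.map g id)) (by rw [map_prodMap_id_fst hg, hσ])
      (iInf_le_of_le hσΨ ?_)
    rw [klDiv_prod_eq_add σ, hσ, ← map_prodMap_id_prod hg]
    gcongr
    exact InformationTheory.klDiv_map_le σ (P.prod Q) hg'

end ReqSupply

section SplitLast

variable {𝒳 𝒲 : Type*} [MeasurableSpace 𝒳] [MeasurableSpace 𝒲]

variable (𝒳 𝒲) in
/-- The identification `𝒳 × 𝒲^(t+1) ≃ (𝒳 × 𝒲^t) × 𝒲` separating the last noise variable from the
past. -/
def splitLast (t : ℕ) :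
    𝒳 × (Fin (t + 1) → 𝒲) ≃ᵐ (𝒳 × (Fin t → 𝒲)) × 𝒲 :=
  ((MeasurableEquiv.refl 𝒳).prodCongr
    ((MeasurableEquiv.piFinSuccAbove (fun _ => 𝒲) (Fin.last t)).trans
      MeasurableEquiv.prodComm)).trans MeasurableEquiv.prodAssoc.symm

lemma splitLast_apply (t : ℕ) (p : 𝒳 × (Fin (t + 1) → 𝒲)) :
    splitLast 𝒳 𝒲 t p = ((p.1, fun i => p.2 i.castSucc), p.2 (Fin.last t)) := by
  simp only [← Fin.succAbove_last]
  rfl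

lemma measurePreserving_splitLast (t : ℕ) (Φ : Measure 𝒳) [SFinite Φ] (R : Measure 𝒲)
    [SigmaFinite R] :
    MeasurePreserving (splitLast 𝒳 𝒲 t) (Φ.prod (Measure.pi fun _ => R))
      ((Φ.prod (Measure.pi fun _ => R)).prod R) :=
  (((measurePreserving_prodAssoc Φ (Measure.pi fun _ => R) R).symm _).comp
    ((MeasurePreserving.id Φ).prod (Measure.measurePreserving_swap.comp
      (measurePreserving_piFinSuccAbove (fun _ => R) (Fin.last t)))))

end SplitLast

section Tracking

variable {𝒳 𝒲 : Type*} [MeasurableSpace 𝒳] [MeasurableSpace 𝒲] {f : 𝒳 × 𝒲 → 𝒳}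

lemma stateTrans_succ_eq_comp (f : 𝒳 × 𝒲 → 𝒳) (t : ℕ) :
    stateTrans f (t + 1) = (f ∘ Prod.map (stateTrans f t) id) ∘ splitLast 𝒳 𝒲 t := by
  ext p
  simp only [Function.comp_apply, splitLast_apply]
  rfl

lemma measurable_stateTrans (hf : Measurable f) (t : ℕ) : Measurable (stateTrans f t) := by
  induction t with
  | zero => exact measurable_fst
  | succ t ih =>
    rw [stateTrans_succ_eq_comp]
    exact (hf.comp (ih.prodMap measurable_id)).comp (splitLast 𝒳 𝒲 t).measurable

/-- `ρ`, a joint law of the initial state and the noise up to time `t`, makes the state have law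
`Φ k` at every time `k = 0, …, t`. -/
def Tracks (f : 𝒳 × 𝒲 → 𝒳) (Φ : ℕ → Measure 𝒳) (t : ℕ) (ρ : Measure (𝒳 × (Fin t → 𝒲))) : Prop :=
  ∀ k, ∀ hk : k ≤ t, (ρ.map fun p => stateTrans f k (p.1, fun i => p.2 (i.castLE hk))) = Φ k

variable {Φ : ℕ → Measure 𝒳} {t : ℕ}

lemma tracks_iff {ρ : Measure (𝒳 × (Fin t → 𝒲))} :
    Tracks f Φ t ρ ↔ ρ.fst = Φ 0 ∧ ∀ k, 1 ≤ k → ∀ hk : k ≤ t,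
      (ρ.map fun p => stateTrans f k (p.1, fun i => p.2 (i.castLE hk))) = Φ k := by
  refine ⟨fun h => ⟨h 0 t.zero_le, fun k _ => h k⟩, fun ⟨h_zero, h_pos⟩ k hk => ?_⟩
  rcases k.eq_zero_or_pos with rfl | hk_pos
  · exact h_zero
  · exact h_pos k hk_pos hk

lemma Tracks.fst_eq {ρ : Measure (𝒳 × (Fin t → 𝒲))} (h : Tracks f Φ t ρ) : ρ.fst = Φ 0 :=
  h 0 t.zero_le

lemma Tracks.map_stateTrans {ρ : Measure (𝒳 × (Fin t → 𝒲))} (h : Tracks f Φ t ρ) :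
    ρ.map (stateTrans f t) = Φ t :=
  h t le_rfl

lemma tracks_succ_iff (hf : Measurable f) {ρ : Measure (𝒳 × (Fin (t + 1) → 𝒲))} :
    Tracks f Φ (t + 1) ρ ↔ Tracks f Φ t (ρ.map (splitLast 𝒳 𝒲 t)).fst ∧
      (ρ.map (splitLast 𝒳 𝒲 t)).map (f ∘ Prod.map (stateTrans f t) id) = Φ (t + 1) := by
  have h_past : ∀ k (hk : k ≤ t),
      ((ρ.map (splitLast 𝒳 𝒲 t)).fst.map fun p => stateTrans f k (p.1, fun i => p.2 (i.castLE hk)))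
        = ρ.map fun p => stateTrans f k (p.1, fun i => p.2 (i.castLE (hk.trans t.le_succ))) := by
    intro k hk
    have := measurable_stateTrans hf k
    rw [Measure.fst, Measure.map_map measurable_fst (splitLast 𝒳 𝒲 t).measurable,
      Measure.map_map (by fun_prop) (measurable_fst.comp (splitLast 𝒳 𝒲 t).measurable)]
    congr 1
    ext p
    simp only [Function.comp_apply, splitLast_apply]
    rfl
  have h_last : (ρ.map (splitLast 𝒳 𝒲 t)).map (f ∘ Prod.map (stateTrans f t) id)
      = ρ.map (stateTrans f (t + 1)) := by
    rw [stateTrans_succ_eq_comp, Measure.map_map _ (splitLast 𝒳 𝒲 t).measurable]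
    exact hf.comp ((measurable_stateTrans hf t).prodMap measurable_id)
  rw [h_last]
  refine ⟨fun h => ⟨fun k hk => (h_past k hk).trans (h k _), h.map_stateTrans⟩,
    fun ⟨h, h_succ⟩ k hk => ?_⟩
  rcases Nat.le_succ_iff.1 hk with hkt | rfl
  · exact (h_past k hkt).symm.trans (h k hkt)
  · exact h_succ

/-- The least divergence from the nominal law `Φ 0 ⊗ R^{⊗t}` of a joint law of the initial state
and the noise under which the state tracks `Φ` up to time `t`. -/
noncomputable def trackingSupply (f : 𝒳 × 𝒲 → 𝒳) (R : Measure 𝒲) (Φ : ℕ → Measure 𝒳) (t : ℕ) :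
    ℝ≥0∞ :=
  ⨅ (ρ : Measure (𝒳 × (Fin t → 𝒲))) (_ : Tracks f Φ t ρ),
    InformationTheory.klDiv ρ ((Φ 0).prod (Measure.pi fun _ => R))

variable (Φ) (R : Measure 𝒲) [IsProbabilityMeasure R] [IsFiniteMeasure (Φ 0)]

lemma trackingSupply_zero (f : 𝒳 × 𝒲 → 𝒳) : trackingSupply f R Φ 0 = 0 := by
  have h_nominal : Tracks f Φ 0 ((Φ 0).prod (Measure.pi fun _ => R)) :=
    tracks_iff.2 ⟨Measure.fst_prod, by lia⟩
  exact le_antisymm (iInf₂_le_of_le _ h_nominal (by rw [InformationTheory.klDiv_self])) zero_le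

lemma trackingSupply_succ_eq_iInf (hf : Measurable f) (t : ℕ) :
    trackingSupply f R Φ (t + 1) =
      ⨅ (σ : Measure ((𝒳 × (Fin t → 𝒲)) × 𝒲)) (_ : Tracks f Φ t σ.fst ∧
        σ.map (f ∘ Prod.map (stateTrans f t) id) = Φ (t + 1)),
        InformationTheory.klDiv σ (((Φ 0).prod (Measure.pi fun _ => R)).prod R) := by
  let e := splitLast 𝒳 𝒲 t
  refine Function.Surjective.iInf_congr (fun ρ => ρ.map e) (fun σ => ⟨σ.map e.symm, by simp⟩)
    fun ρ => iInf_congr_Prop (tracks_succ_iff hf).symm fun h => ?_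
  have : IsFiniteMeasure ρ := isFiniteMeasure_of_fst_eq h.fst_eq
  rw [← (measurePreserving_splitLast t (Φ 0) R).map_eq, klDiv_map_measurableEquiv]

variable [StandardBorelSpace 𝒲]

lemma trackingSupply_eq_iInf_kernel (f : 𝒳 × 𝒲 → 𝒳) (t : ℕ) :
    trackingSupply f R Φ t =
      ⨅ (κ : Kernel 𝒳 (Fin t → 𝒲)) (_ : IsMarkovKernel κ)
        (_ : ∀ᵐ x ∂(Φ 0), κ x ≪ Measure.pi fun _ => R)
        (_ : ∀ k, 1 ≤ k → ∀ hk : k ≤ t,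
          ((Φ 0 ⊗ₘ κ).map fun p => stateTrans f k (p.1, fun i => p.2 (i.castLE hk))) = Φ k),
        ∫⁻ x, klDiv (κ x) (Measure.pi fun _ => R) ∂(Φ 0) := by
  simp only [trackingSupply, tracks_iff, iInf_and]
  exact (iInf_kernel_eq_iInf_law (Measure.pi fun _ => R) (Φ 0) fun ρ => ∀ k, 1 ≤ k → ∀ hk : k ≤ t,
    (ρ.map fun p => stateTrans f k (p.1, fun i => p.2 (i.castLE hk))) = Φ k).symm

lemma trackingSupply_succ (hf : Measurable f) (t : ℕ) :
    trackingSupply f R Φ (t + 1) = trackingSupply f R Φ t + reqSupply f R (Φ t) (Φ (t + 1)) := by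
  let π := (Φ 0).prod (Measure.pi fun _ : Fin t => R)
  calc trackingSupply f R Φ (t + 1)
    _ = ⨅ (σ : Measure ((𝒳 × (Fin t → 𝒲)) × 𝒲)) (_ : Tracks f Φ t σ.fst ∧
          σ.map (f ∘ Prod.map (stateTrans f t) id) = Φ (t + 1)),
          InformationTheory.klDiv σ (π.prod R) :=
      trackingSupply_succ_eq_iInf Φ R hf t
    _ = ⨅ (P : Measure (𝒳 × (Fin t → 𝒲))) (_ : Tracks f Φ t P)
          (σ : Measure ((𝒳 × (Fin t → 𝒲)) × 𝒲)) (_ : σ.fst = P)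
          (_ : σ.map (f ∘ Prod.map (stateTrans f t) id) = Φ (t + 1)),
          InformationTheory.klDiv σ (π.prod R) := by
      refine le_antisymm (le_iInf₂ fun P hP => le_iInf₂ fun σ hσ => le_iInf fun hσΦ => ?_)
        (le_iInf₂ fun σ h => ?_)
      · exact iInf₂_le σ ⟨hσ ▸ hP, hσΦ⟩
      · exact iInf₂_le_of_le σ.fst h.1 (iInf₂_le_of_le σ rfl (iInf_le _ h.2))
    _ = ⨅ (P : Measure (𝒳 × (Fin t → 𝒲))) (_ : Tracks f Φ t P),
          (InformationTheory.klDiv P π + reqSupply f R (Φ t) (Φ (t + 1))) := by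
      refine iInf_congr fun P => iInf_congr fun hP => ?_
      have : IsFiniteMeasure P := isFiniteMeasure_of_fst_eq hP.fst_eq
      rw [iInf_klDiv_extension_eq_add hf (measurable_stateTrans hf t), hP.map_stateTrans]
    _ = trackingSupply f R Φ t + reqSupply f R (Φ t) (Φ (t + 1)) := by
      simp only [trackingSupply, ENNReal.iInf_add, π]

lemma trackingSupply_eq_sum (hf : Measurable f) (t : ℕ) :
    trackingSupply f R Φ t = ∑ k ∈ Finset.range t, reqSupply f R (Φ k) (Φ (k + 1)) := by
  induction t with
  | zero => simp [trackingSupply_zero]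
  | succ t ih => rw [trackingSupply_succ Φ R hf, ih, Finset.sum_range_succ]

end Tracking

theorem reqSupply_tracking_general
    {𝒳 𝒲 : Type*} [MeasurableSpace 𝒳] [MeasurableSpace 𝒲] [StandardBorelSpace 𝒲]
    (R : Measure 𝒲) [IsProbabilityMeasure R] (f : 𝒳 × 𝒲 → 𝒳) (hf : Measurable f)
    (Φ : ℕ → Measure 𝒳) [IsFiniteMeasure (Φ 0)] (t : ℕ) :
    (⨅ (κ : Kernel 𝒳 (Fin t → 𝒲)) (_ : IsMarkovKernel κ)
        (_ : ∀ᵐ x ∂(Φ 0), κ x ≪ Measure.pi fun _ => R)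
        (_ : ∀ k, 1 ≤ k → ∀ hk : k ≤ t,
          ((Φ 0 ⊗ₘ κ).map fun p => stateTrans f k (p.1, fun i => p.2 (i.castLE hk))) = Φ k),
        ∫⁻ x, klDiv (κ x) (Measure.pi fun _ => R) ∂(Φ 0))
      = ∑ k ∈ Finset.range t, reqSupply f R (Φ k) (Φ (k + 1)) := by
  rw [← trackingSupply_eq_iInf_kernel, trackingSupply_eq_sum Φ R hf]

/-- State distribution tracking: the minimum conditional relative entropy supply required
to keep the state distribution equal to `Φ` at all times `k = 1, …, t` equals `t` times the
one-step quantity `J_1(Φ, Φ)` (with one-step transition map `f` and nominal one-step noise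
distribution `R`). -/
theorem reqSupply_tracking
    {𝒳 𝒲 : Type*} [MeasurableSpace 𝒳] [StandardBorelSpace 𝒳]
    [MeasurableSpace 𝒲] [StandardBorelSpace 𝒲]
    (R : Measure 𝒲) [IsProbabilityMeasure R]
    (f : 𝒳 × 𝒲 → 𝒳) (hf : Measurable f)
    (t : ℕ) (ht : 1 ≤ t)
    (Φ : Measure 𝒳) [IsProbabilityMeasure Φ] :
    (⨅ (κ : Kernel 𝒳 (Fin t → 𝒲)) (_ : IsMarkovKernel κ)
        (_ : ∀ᵐ x ∂Φ, κ x ≪ Measure.pi fun _ => R)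
        (_ : ∀ k, 1 ≤ k → ∀ hk : k ≤ t,
          ((Φ ⊗ₘ κ).map fun p => stateTrans f k (p.1, fun i => p.2 (i.castLE hk))) = Φ),
        ∫⁻ x, klDiv (κ x) (Measure.pi fun _ => R) ∂Φ)
      = t * reqSupply f R Φ Φ := by
  simpa using reqSupply_tracking_general R f hf (fun _ => Φ) t
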